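/- (Point-interval temporal connectivity via incremental MST.) Let V be a finite vertex type, G a simple graph on V, and t : Sym2 V → ℝ a timestamp function that is injective on the edge set of G. Fix reals t₁ ≤ t₂. Let G_{≤t₂} be the subgraph of G consisting of the edges e with t(e) ≤ t₂, and assume G_{≤t₂} is connected. Let T be a spanning tree of G_{≤t₂} maximizing the total timestamp Σ_{e ∈ edges(T)} t(e) among all spanning trees of G_{≤t₂} (equivalently, the minimum spanning tree under weight −t). Then for all vertices u and v: u and v are connected in the subgraph G_{[t₁,t₂]} of G consisting of the edges e with t₁ ≤ t(e) ≤ t₂ if and only if every edge on the unique path in T from u to v has timestamp at least t₁. -/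

import Mathlib

/-!
A maximum spanning tree `T` satisfies an exchange property: if deleting an edge `e` of `T` separates
the endpoints of an edge `f` of the ambient graph, then replacing `e` by `f` gives another spanning
tree, so the weight of `f` is at most that of `e`. Hence the endpoints of an edge of weight at least
`a` are joined in `T` by edges of weight at least `a`, and deleting all lighter edges leaves the
same connected components in the ambient graph as in `T`. In `T` these are read off from the unique
paths.
-/

open SimpleGraph

section Reachability

variable {V : Type*} {G H : SimpleGraph V} {u v : V}

theorem reachable_of_forall_adj_reachable (h : ∀ ⦃x y⦄, G.Adj x y → H.Reachable x y)
    (huv : G.Reachable u v) : H.Reachable u v := by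
  obtain ⟨p⟩ := huv
  induction p with
  | nil => exact .rfl
  | cons hadj _ ih => exact (h hadj).trans ih

theorem reachable_deleteEdges_iff_of_isAcyclic (hG : G.IsAcyclic) {p : G.Walk u v} (hp : p.IsPath)
    {s : Set (Sym2 V)} : (G.deleteEdges s).Reachable u v ↔ ∀ e ∈ p.edges, e ∉ s := by
  refine ⟨fun h e hep => ?_, fun h => ⟨p.toDeleteEdges s h⟩⟩
  obtain ⟨q, hq⟩ := h.exists_isPath
  have hle : G.deleteEdges s ≤ G := G.deleteEdges_le s
  have hpq : p = q.mapLe hle :=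
    congrArg Subtype.val ((hG.subsingleton_path u v).elim ⟨p, hp⟩ ⟨_, hq.mapLe hle⟩)
  rw [hpq, Walk.edges_mapLe_eq_edges] at hep
  have he := q.edges_subset_edgeSet hep
  rw [edgeSet_deleteEdges] at he
  exact he.2

end Reachability

section EdgeExchange

variable {V : Type*} {G T : SimpleGraph V} {a b x y : V} {e : Sym2 V}

theorem reachable_or_of_reachable_sup_edge (h : (G ⊔ edge a b).Reachable x y) :
    G.Reachable x y ∨ G.Reachable x a ∨ G.Reachable x b := by
  obtain ⟨p⟩ := h
  induction p with
  | nil => exact .inl .rfl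
  | cons hadj _ ih =>
    rw [sup_adj, edge_adj] at hadj
    rcases hadj with hG | ⟨⟨rfl, -⟩ | ⟨rfl, -⟩, -⟩
    · exact ih.imp hG.reachable.trans (.imp hG.reachable.trans hG.reachable.trans)
    · exact .inr (.inl .rfl)
    · exact .inr (.inr .rfl)

theorem connected_sup_edge_of_not_reachable (hab : (G ⊔ edge a b).Connected)
    (hxy : ¬ G.Reachable x y) : (G ⊔ edge x y).Connected := by
  have hle : G ≤ G ⊔ edge x y := le_sup_left
  have hside (z : V) : G.Reachable z a ∨ G.Reachable z b :=
    (reachable_or_of_reachable_sup_edge (hab.preconnected z a)).elim .inl id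
  have hnew : (G ⊔ edge x y).Reachable x y := by
    have hne : x ≠ y := fun h => hxy (h ▸ .rfl)
    exact Adj.reachable (Or.inr (edge_adj x y x y |>.2 ⟨.inl ⟨rfl, rfl⟩, hne⟩))
  have hjoin : (G ⊔ edge x y).Reachable a b := by
    rcases hside x, hside y with ⟨hx | hx, hy | hy⟩
    · exact absurd (hx.trans hy.symm) hxy
    · exact (hx.symm.mono hle).trans (hnew.trans (hy.mono hle))
    · exact (hy.symm.mono hle).trans (hnew.symm.trans (hx.mono hle))
    · exact absurd (hx.trans hy.symm) hxy
  refine (connected_iff_exists_forall_reachable _).2 ⟨a, fun z => .symm ?_⟩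
  exact (hside z).elim (·.mono hle) fun hzb => (hzb.mono hle).trans hjoin.symm

theorem isTree_deleteEdges_sup_edge (hT : T.IsTree)
    (hxy : ¬ (T.deleteEdges {e}).Reachable x y) : (T.deleteEdges {e} ⊔ edge x y).IsTree := by
  induction e with | h a b
  have hle : T ≤ T.deleteEdges {s(a, b)} ⊔ edge a b := sdiff_le_iff'.1 le_rfl
  exact ⟨connected_sup_edge_of_not_reachable (hT.connected.mono hle) hxy,
    .sup_edge_of_not_reachable hxy (hT.isAcyclic.anti (T.deleteEdges_le _))⟩

theorem finsum_edgeSet_deleteEdges_sup_edge {M : Type*} [AddCommMonoid M] (w : Sym2 V → M)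
    (hfin : T.edgeSet.Finite) (hxy : ¬ (T.deleteEdges {e}).Reachable x y) :
    ∑ᶠ f ∈ (T.deleteEdges {e} ⊔ edge x y).edgeSet, w f =
      w s(x, y) + ∑ᶠ f ∈ T.edgeSet \ {e}, w f := by
  have hne : x ≠ y := fun h => hxy (h ▸ .rfl)
  have hnew : s(x, y) ∉ T.edgeSet \ {e} := by
    rw [← edgeSet_deleteEdges]
    exact fun h => hxy (Adj.reachable h)
  rw [edgeSet_sup, edgeSet_deleteEdges, edgeSet_edge_of_ne hne, Set.union_singleton,
    finsum_mem_insert _ hnew hfin.sdiff]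

end EdgeExchange

/-- `T` is a spanning tree of `G` whose total edge weight under `w` is largest among all spanning
trees of `G`. The total is a `finsum`, so it is meaningful only for trees with finitely many edges
of nonzero weight. -/
structure IsMaxSpanningTree {V M : Type*} [AddCommMonoid M] [LE M] (w : Sym2 V → M)
    (G T : SimpleGraph V) : Prop where
  le : T ≤ G
  isTree : T.IsTree
  finsum_le : ∀ T' ≤ G, T'.IsTree → ∑ᶠ e ∈ T'.edgeSet, w e ≤ ∑ᶠ e ∈ T.edgeSet, w e

namespace IsMaxSpanningTree

variable {V M : Type*} [Finite V] [AddCommMonoid M] {w : Sym2 V → M} {G T : SimpleGraph V}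

theorem weight_le_of_not_reachable_deleteEdges [PartialOrder M] [IsOrderedCancelAddMonoid M]
    (hT : IsMaxSpanningTree w G T) {x y : V} {e : Sym2 V} (hadj : G.Adj x y) (he : e ∈ T.edgeSet)
    (hxy : ¬ (T.deleteEdges {e}).Reachable x y) : w s(x, y) ≤ w e := by
  have hfin : T.edgeSet.Finite := Set.toFinite _
  have hle : T.deleteEdges {e} ⊔ edge x y ≤ G :=
    sup_le ((T.deleteEdges_le _).trans hT.le) ((edge_le_iff G).2 (.inr hadj))
  have hsum := hT.finsum_le _ hle (isTree_deleteEdges_sup_edge hT.isTree hxy)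
  rw [finsum_edgeSet_deleteEdges_sup_edge w hfin hxy,
    ← finsum_mem_add_sdiff (Set.singleton_subset_iff.2 he) hfin, finsum_mem_singleton] at hsum
  exact le_of_add_le_add_right hsum

theorem reachable_deleteEdges_iff [LinearOrder M] [IsOrderedCancelAddMonoid M]
    (hT : IsMaxSpanningTree w G T) (a : M) {u v : V} :
    (G.deleteEdges {e | w e < a}).Reachable u v ↔ (T.deleteEdges {e | w e < a}).Reachable u v := by
  refine ⟨reachable_of_forall_adj_reachable fun x y hxy => ?_, .mono (deleteEdges_mono hT.le)⟩
  obtain ⟨hadj, hlarge⟩ := deleteEdges_adj.1 hxy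
  by_contra hsep
  obtain ⟨p, hp⟩ := hT.isTree.connected.exists_isPath x y
  obtain ⟨e, hsmall, hep⟩ := p.exists_mem_edges_of_not_reachable_deleteEdges hsep
  have hcut : ¬ (T.deleteEdges {e}).Reachable x y := fun h =>
    (reachable_deleteEdges_iff_of_isAcyclic hT.isTree.isAcyclic hp).1 h e hep rfl
  have hle := hT.weight_le_of_not_reachable_deleteEdges hadj (p.edges_subset_edgeSet hep) hcut
  exact hlarge (hle.trans_lt hsmall)

end IsMaxSpanningTree

theorem fromEdgeSet_interval_eq_deleteEdges {V M : Type*} [LinearOrder M] (s : Set (Sym2 V))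
    (w : Sym2 V → M) (a b : M) :
    fromEdgeSet {e | e ∈ s ∧ a ≤ w e ∧ w e ≤ b} =
      (fromEdgeSet {e | e ∈ s ∧ w e ≤ b}).deleteEdges {e | w e < a} := by
  rw [deleteEdges_fromEdgeSet]
  congr 1
  ext e
  simp only [Set.mem_ofPred_eq, Set.mem_sdiff, not_lt]
  tauto

theorem point_interval_connectivity_general {V M : Type*} [Finite V] [AddCommMonoid M]
    [LinearOrder M] [IsOrderedCancelAddMonoid M] {w : Sym2 V → M} {G T : SimpleGraph V}
    (hT : IsMaxSpanningTree w G T) (a : M) (u v : V) :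
    (G.deleteEdges {e | w e < a}).Reachable u v ↔
      ∀ p : T.Walk u v, p.IsPath → ∀ e ∈ p.edges, a ≤ w e := by
  have hpath {p : T.Walk u v} (hp : p.IsPath) :
      (G.deleteEdges {e | w e < a}).Reachable u v ↔ ∀ e ∈ p.edges, a ≤ w e := by
    simp only [hT.reachable_deleteEdges_iff, Set.mem_ofPred_eq, not_lt,
      reachable_deleteEdges_iff_of_isAcyclic hT.isTree.isAcyclic hp]
  obtain ⟨p, hp⟩ := hT.isTree.connected.exists_isPath u v
  exact ⟨fun h _ hq => (hpath hq).1 h, fun h => (hpath hp).2 (h p hp)⟩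

/-- Point-interval temporal connectivity via incremental MST: if `T` is the
spanning tree of the subgraph of edges with timestamp at most `t₂` maximizing
the total timestamp, then two vertices are connected by edges with timestamps
in `[t₁, t₂]` iff every edge on the (unique) path between them in `T` has
timestamp at least `t₁`. -/
theorem point_interval_connectivity {V : Type*} [Fintype V]
    (G : SimpleGraph V) (t : Sym2 V → ℝ) (hinj : Set.InjOn t G.edgeSet)
    (t₁ t₂ : ℝ) (ht : t₁ ≤ t₂)
    (hconn : (SimpleGraph.fromEdgeSet {e | e ∈ G.edgeSet ∧ t e ≤ t₂}).Connected)
    (T : SimpleGraph V)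
    (hT : T ≤ SimpleGraph.fromEdgeSet {e | e ∈ G.edgeSet ∧ t e ≤ t₂})
    (hTc : T.Connected) (hTa : T.IsAcyclic)
    (hmax : ∀ T' : SimpleGraph V,
      T' ≤ SimpleGraph.fromEdgeSet {e | e ∈ G.edgeSet ∧ t e ≤ t₂} →
      T'.Connected → T'.IsAcyclic →
      (∑ᶠ e ∈ T'.edgeSet, t e) ≤ ∑ᶠ e ∈ T.edgeSet, t e) :
    ∀ u v : V,
      (SimpleGraph.fromEdgeSet
          {e | e ∈ G.edgeSet ∧ t₁ ≤ t e ∧ t e ≤ t₂}).Reachable u v ↔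
      ∀ p : T.Walk u v, p.IsPath → ∀ e ∈ p.edges, t₁ ≤ t e := by
  rw [fromEdgeSet_interval_eq_deleteEdges]
  exact point_interval_connectivity_general
    ⟨hT, ⟨hTc, hTa⟩, fun T' hle hT' => hmax T' hle hT'.connected hT'.isAcyclic⟩ t₁
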